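/- If a push-up operation is performed in a tree G from a weakly-complete subtree T of height h₂ to a weakly-complete sibling subtree S of height h₁ (with h₁ < h₂, where h₁ is measured after the move and h₂ before), then the total distance of G under the finite uniform workload increases by at most 8k·|V(T)|, which is O(k·n) for a tree on n nodes. -/

import Mathlib

/-!
In a tree `t` on `N` nodes, the distance of two nodes is the number of edges separating them, and
each edge corresponds to the proper subtree `w` hanging below it. Hence the total distance is
Wiener's sum `2 * ∑ w, |w| * (N - |w|)` over the proper subtrees (`wiener`). The equality of graph
distance with the cut distance `cd` is `dist_eq_cd`: `cd` is a pseudometric that is at most `1`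
on edges, which gives one inequality, and an explicit walk gives the other.

A push-up keeps `N` and changes only the sizes of the subtrees on two root-to-leaf paths: those on
the path in `T` lose one node, those on the path in `S` gain one. Since
`(s + 1) * (N - (s + 1)) - s * (N - s) = N - 1 - 2 * s`, and the paths have `h₂` and `h₁` nodes,
half of the increase of the total distance equals
`(h₁ - h₂) * (N - 1) - 2 * ∑ s (path in S) + 2 * ∑ s (path in T₀)`.

For `k ≥ 2` the negative terms are dropped: subtree sizes decrease at least geometrically with
the depth, so the last sum is at most `3 * |T|` (`sum_psizes_le_three`). For `k = 1` the trees are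
paths, the two sums are triangular numbers (`sum_psizes_path`, `le_sum_psizes`), and they cancel
against `(h₁ - h₂) * (N - 1)` up to a constant.
-/

inductive KTree : Type where
  | node : ℕ → List KTree → KTree

namespace KTree

instance : Inhabited KTree := ⟨node 0 []⟩

def rootKey : KTree → ℕ
  | node x _ => x

def children : KTree → List KTree
  | node _ cs => cs

def keys : KTree → List ℕ
  | node x cs => x :: (cs.attach.map (fun c => c.1.keys)).flatten
decreasing_by
  have := List.sizeOf_lt_of_mem c.2
  simp only [KTree.node.sizeOf_spec]
  omega

def size (t : KTree) : ℕ := t.keys.length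

def height : KTree → ℕ
  | node _ cs => (cs.attach.map (fun c => c.1.height + 1)).foldr max 0
decreasing_by
  have := List.sizeOf_lt_of_mem c.2
  simp only [KTree.node.sizeOf_spec]
  omega

def countAt : KTree → ℕ → ℕ
  | node _ _, 0 => 1
  | node _ cs, d + 1 => ((cs.attach.map (fun c => c.1.countAt d)).foldr (· + ·) 0)

def countsAt : KTree → ℕ → List ℕ
  | node _ cs, 0 => [cs.length]
  | node _ cs, d + 1 => (cs.attach.map (fun c => c.1.countsAt d)).flatten

def edges : KTree → List (ℕ × ℕ)
  | node x cs => (cs.map fun c => (x, c.rootKey)) ++ (cs.attach.map (fun c => c.1.edges)).flatten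
decreasing_by
  have := List.sizeOf_lt_of_mem c.2
  simp only [KTree.node.sizeOf_spec]
  omega

def graph (t : KTree) : SimpleGraph ℕ :=
  SimpleGraph.fromRel (fun a b => (a, b) ∈ t.edges)

noncomputable def dist (t : KTree) (u v : ℕ) : ℕ := t.graph.dist u v

noncomputable def totalDist (t : KTree) (D : ℕ → ℕ → ℕ) : ℕ :=
  ∑ u ∈ t.keys.toFinset, ∑ v ∈ t.keys.toFinset, t.dist u v * D u v

noncomputable def totalDistUniform (t : KTree) : ℕ :=
  ∑ u ∈ t.keys.toFinset, ∑ v ∈ t.keys.toFinset, t.dist u v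

def DegLE (k : ℕ) : KTree → Prop
  | node _ cs => cs.length ≤ k ∧ ∀ c ∈ cs, DegLE k c

def Separated : KTree → Prop
  | node _ cs =>
      (cs.Pairwise fun a b =>
        (∀ u ∈ a.keys, ∀ v ∈ b.keys, u < v) ∨ (∀ u ∈ a.keys, ∀ v ∈ b.keys, v < u)) ∧
      ∀ c ∈ cs, Separated c

def IsKAST (k i j : ℕ) (t : KTree) : Prop :=
  t.DegLE k ∧ t.Separated ∧ t.keys.Nodup ∧ ∀ m, m ∈ t.keys ↔ m ∈ Finset.Icc i j

def WeaklyComplete (k : ℕ) (t : KTree) : Prop :=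
  t.DegLE k ∧ ∀ d, d < t.height → t.countAt d = k ^ d

def subtreeAt : KTree → List ℕ → Option KTree
  | t, [] => some t
  | node _ cs, i :: is =>
    match cs[i]? with
    | some c => subtreeAt c is
    | none => none

def replaceAt : KTree → List ℕ → KTree → KTree
  | _, [], r => r
  | node x cs, i :: is, r => node x (cs.set i (replaceAt (cs.getD i default) is r))

def attachLeaf : KTree → List ℕ → ℕ → KTree
  | node x cs, [], u => node x (cs ++ [node u []])
  | node x cs, i :: is, u => node x (cs.set i (attachLeaf (cs.getD i default) is u))

def IsSubtreeOf (s t : KTree) : Prop := ∃ pos, subtreeAt t pos = some s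

def graphAvoiding (t : KTree) (c : ℕ) : SimpleGraph ℕ :=
  SimpleGraph.fromRel (fun a b => (a, b) ∈ t.edges ∧ a ≠ c ∧ b ≠ c)

def IsCentroid (t : KTree) (c : ℕ) : Prop :=
  c ∈ t.keys ∧ ∀ w ∈ t.keys, w ≠ c →
    2 * {w' | w' ∈ t.keys ∧ (t.graphAvoiding c).Reachable w w'}.ncard ≤ t.size

def uniformDemand : ℕ → ℕ → ℕ := fun u v => if u = v then 0 else 1

def IsOptimal (k n : ℕ) (T : KTree) : Prop :=
  IsKAST k 1 n T ∧ ∀ T' : KTree, IsKAST k 1 n T' → totalDistUniform T ≤ totalDistUniform T'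

def truncate : ℕ → KTree → KTree
  | 0, node x _ => node x []
  | d + 1, node x cs => node x (cs.attach.map (fun c => truncate d c.1))

def LastLevelPartial (k : ℕ) (t : KTree) : Prop :=
  1 ≤ t.height ∧ 0 < t.countAt t.height ∧ t.countAt t.height < k * t.countAt (t.height - 1)

def Packed (k : ℕ) (t : KTree) : Prop :=
  ∀ i j : ℕ, i < j → 0 < (t.countsAt (t.height - 1)).getD j 0 →
    (t.countsAt (t.height - 1)).getD i 0 = k

def Reorder : KTree → KTree → Prop
  | node x cs, node y ds =>
      x = y ∧ ∃ e : Fin cs.length ≃ Fin ds.length,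
        ∀ i : Fin cs.length, Reorder cs[i] ds[e i]
termination_by t _ => sizeOf t
decreasing_by
  have h1 : cs[i] ∈ cs := List.getElem_mem _
  have := List.sizeOf_lt_of_mem h1
  simp only [KTree.node.sizeOf_spec]
  omega

def IsQuasiOptimal (k n : ℕ) (t : KTree) : Prop :=
  t.keys.Nodup ∧ (∀ m, m ∈ t.keys ↔ m ∈ Finset.Icc 1 n) ∧
  t.children.length = k + 1 ∧
  (∀ c ∈ t.children, WeaklyComplete k c) ∧
  (∀ d, 0 < d → d < t.height → t.countAt d = (k + 1) * k ^ (d - 1)) ∧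
  Packed k t

end KTree

namespace KTree

/-! ### Unfolding the nested recursion -/

/-- Structural induction, with the induction hypothesis for all children of a node. -/
theorem ind {p : KTree → Prop} (h : ∀ x cs, (∀ c ∈ cs, p c) → p (node x cs)) : ∀ t, p t
  | node x cs => h x cs (fun c _ => ind h c)

theorem keys_node (x : ℕ) (cs : List KTree) :
    (node x cs).keys = x :: (cs.map keys).flatten := by
  simp [keys]

theorem edges_node (x : ℕ) (cs : List KTree) :
    (node x cs).edges = (cs.map fun c => (x, c.rootKey)) ++ (cs.map edges).flatten := by
  simp [edges]

theorem height_node (x : ℕ) (cs : List KTree) :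
    (node x cs).height = (cs.map (fun c => c.height + 1)).foldr max 0 := by
  simp [height]

theorem countAt_succ (x : ℕ) (cs : List KTree) (d : ℕ) :
    (node x cs).countAt (d + 1) = (cs.map (fun c => c.countAt d)).sum := by
  simp [countAt, List.sum]

theorem size_node (x : ℕ) (cs : List KTree) :
    (node x cs).size = 1 + (cs.map size).sum := by
  simp only [size, keys_node, List.length_cons, List.length_flatten, List.map_map]
  rw [add_comm]; rfl

/-! ### Proper subtrees -/

/-- The list of all proper subtrees, one for each node other than the root. -/
def subs : KTree → List KTree
  | node _ cs => (cs.attach.map (fun c => c.1 :: c.1.subs)).flatten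
decreasing_by
  have := List.sizeOf_lt_of_mem c.2
  simp only [KTree.node.sizeOf_spec]
  omega

theorem subs_node (x : ℕ) (cs : List KTree) :
    (node x cs).subs = (cs.map (fun c => c :: c.subs)).flatten := by
  simp [subs]

theorem rootKey_mem (t : KTree) : t.rootKey ∈ t.keys := by
  cases t; simp [keys_node, rootKey]

theorem child_sublist {x : ℕ} {cs : List KTree} {c : KTree} (hc : c ∈ cs) :
    c.keys.Sublist (node x cs).keys := by
  rw [keys_node]
  exact (List.sublist_flatten_of_mem (List.mem_map_of_mem hc)).trans (List.sublist_cons_self _ _)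

theorem child_sublist' {cs : List KTree} {c : KTree} (hc : c ∈ cs) :
    c.keys.Sublist (cs.map keys).flatten :=
  List.sublist_flatten_of_mem (List.mem_map_of_mem hc)

theorem subs_sublist (t : KTree) : ∀ w ∈ t.subs, w.keys.Sublist t.keys := by
  induction t using ind with
  | h x cs ih =>
    intro w hw
    simp only [subs_node, List.mem_flatten, List.mem_map] at hw
    obtain ⟨_, ⟨c, hc, rfl⟩, hw⟩ := hw
    rcases List.mem_cons.1 hw with rfl | hw
    · exact child_sublist hc
    · exact (ih c hc w hw).trans (child_sublist hc)

theorem subs_child {x : ℕ} {cs : List KTree} {w : KTree} (hw : w ∈ (node x cs).subs) :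
    ∃ c ∈ cs, w.keys.Sublist c.keys := by
  simp only [subs_node, List.mem_flatten, List.mem_map] at hw
  obtain ⟨_, ⟨c, hc, rfl⟩, hw⟩ := hw
  rcases List.mem_cons.1 hw with rfl | hw
  · exact ⟨_, hc, List.Sublist.refl _⟩
  · exact ⟨c, hc, subs_sublist c w hw⟩

theorem root_not_mem {t : KTree} (h : t.keys.Nodup) {w : KTree} (hw : w ∈ t.subs) :
    t.rootKey ∉ w.keys := by
  cases t with
  | node x cs =>
    obtain ⟨c, hc, hs⟩ := subs_child hw
    rw [keys_node, List.nodup_cons] at h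
    intro hx
    exact h.1 ((child_sublist' hc).subset (hs.subset hx))

/-! ### Graph distance equals cut distance -/

open Classical in
/-- `1` if exactly one of `a`, `b` lies in `w`, that is, if the edge above `w` separates them. -/
noncomputable def sep (w : KTree) (a b : ℕ) : ℕ :=
  if (a ∈ w.keys ↔ b ∈ w.keys) then 0 else 1

theorem sep_triangle (w : KTree) (a b c : ℕ) : sep w a c ≤ sep w a b + sep w b c := by
  unfold sep; split_ifs <;> first | omega | (exfalso; tauto)

/-- Cut distance: the number of proper subtrees of `t` that separate `a` and `b`. -/
noncomputable def cd (t : KTree) (a b : ℕ) : ℕ := (t.subs.map (fun w => sep w a b)).sum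

theorem cd_node (x : ℕ) (cs : List KTree) (a b : ℕ) :
    (node x cs).cd a b = (cs.map (fun c => sep c a b + c.cd a b)).sum := by
  unfold cd
  rw [subs_node]
  induction cs with
  | nil => simp
  | cons c cs ih => simp at ih ⊢; rw [ih]; ring

theorem cd_comm (t : KTree) (a b : ℕ) : t.cd a b = t.cd b a := by
  unfold cd sep; simp only [iff_comm]

theorem cd_self (t : KTree) (a : ℕ) : t.cd a a = 0 := by
  simp [cd, sep]

theorem cd_triangle (t : KTree) (a b c : ℕ) : t.cd a c ≤ t.cd a b + t.cd b c := by
  unfold cd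
  rw [← List.sum_map_add]
  exact List.sum_le_sum (fun w _ => sep_triangle w a b c)

theorem cd_congr {t : KTree} {a a' b : ℕ} (h : ∀ w ∈ t.subs, (a ∈ w.keys ↔ a' ∈ w.keys)) :
    t.cd a b = t.cd a' b := by
  unfold cd
  congr 1
  refine List.map_congr_left (fun w hw => ?_)
  unfold sep
  simp only [h w hw]

theorem cd_congr_root {t : KTree} (hn : t.keys.Nodup) {a b : ℕ} (h : a ∉ t.keys) :
    t.cd a b = t.cd t.rootKey b :=
  cd_congr fun w hw => iff_of_false (fun h' => h ((subs_sublist t w hw).subset h'))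
    (root_not_mem hn hw)

theorem cd_eq_zero {t : KTree} {a b : ℕ} (ha : a ∉ t.keys) (hb : b ∉ t.keys) :
    t.cd a b = 0 := by
  rw [cd_congr (a' := b), cd_self]
  exact fun w hw => iff_of_false (fun h' => ha ((subs_sublist t w hw).subset h'))
    (fun h' => hb ((subs_sublist t w hw).subset h'))

theorem sep_eq_zero {t : KTree} {a b : ℕ} (h : a ∈ t.keys ↔ b ∈ t.keys) :
    sep t a b = 0 := by
  simp [sep, h]

theorem sep_le_one (t : KTree) (a b : ℕ) : sep t a b ≤ 1 := by
  unfold sep; split_ifs <;> omega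

theorem mem_keys_of_edge (t : KTree) : ∀ y z, (y, z) ∈ t.edges → y ∈ t.keys ∧ z ∈ t.keys := by
  induction t using ind with
  | h x cs ih =>
    intro y z h
    simp only [edges_node, List.mem_append, List.mem_map, List.mem_flatten, Prod.mk.injEq] at h
    rcases h with ⟨c, hc, rfl, rfl⟩ | ⟨_, ⟨c, hc, rfl⟩, h⟩
    · exact ⟨by simp [keys_node], (child_sublist hc).subset (rootKey_mem c)⟩
    · have := ih c hc y z h
      exact ⟨(child_sublist hc).subset this.1, (child_sublist hc).subset this.2⟩

/-- Siblings of `c` contain neither the parent key `x` nor any key of `c`, so they contribute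
nothing to the cut distance of such keys. -/
theorem cd_node_of_mem {x : ℕ} {cs : List KTree} (hn : (node x cs).keys.Nodup) {c : KTree}
    (hc : c ∈ cs) {a b : ℕ} (ha : a = x ∨ a ∈ c.keys) (hb : b = x ∨ b ∈ c.keys) :
    (node x cs).cd a b = sep c a b + c.cd a b := by
  rw [cd_node]
  rw [keys_node, List.nodup_cons, List.nodup_flatten] at hn
  obtain ⟨hx, -, hd⟩ := hn
  obtain ⟨l₁, l₂, rfl⟩ := List.append_of_mem hc
  rw [List.map_append, List.map_cons, List.pairwise_append, List.pairwise_cons] at hd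
  have key : ∀ c' ∈ l₁ ++ l₂, ∀ a, (a = x ∨ a ∈ c.keys) → a ∉ c'.keys := by
    rintro c' hc' a (rfl | ha) h
    · refine hx ((child_sublist' (c := c') ?_).subset h)
      simp only [List.mem_append, List.mem_cons] at hc' ⊢
      tauto
    · rcases List.mem_append.1 hc' with hc' | hc'
      · exact hd.2.2 c'.keys (List.mem_map_of_mem hc') c.keys (by simp) h ha
      · exact hd.2.1.1 c'.keys (List.mem_map_of_mem hc') ha h
  have zero : ∀ l : List KTree, (∀ c' ∈ l, c' ∈ l₁ ++ l₂) →
      (l.map (fun c => sep c a b + c.cd a b)).sum = 0 := by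
    intro l hl
    refine List.sum_eq_zero ?_
    intro y hy
    obtain ⟨c', hc', rfl⟩ := List.mem_map.1 hy
    have h1 := key c' (hl c' hc') a ha
    have h2 := key c' (hl c' hc') b hb
    simp only [sep_eq_zero (iff_of_false h1 h2), cd_eq_zero h1 h2, add_zero]
  rw [List.map_append, List.map_cons, List.sum_append, List.sum_cons,
    zero l₁ (fun _ h => List.mem_append_left _ h), zero l₂ (fun _ h => List.mem_append_right _ h)]
  omega

theorem cd_edge (t : KTree) : t.keys.Nodup → ∀ y z, (y, z) ∈ t.edges → t.cd y z ≤ 1 := by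
  induction t using ind with
  | h x cs ih =>
    intro hn y z h
    simp only [edges_node, List.mem_append, List.mem_map, List.mem_flatten, Prod.mk.injEq] at h
    rcases h with ⟨c, hc, rfl, rfl⟩ | ⟨_, ⟨c, hc, rfl⟩, h⟩
    · rw [cd_node_of_mem hn hc (Or.inl rfl) (Or.inr (rootKey_mem c)),
        cd_congr_root (hn.sublist (child_sublist hc)), cd_self]
      · exact sep_le_one _ _ _
      · rw [keys_node, List.nodup_cons] at hn
        exact fun h => hn.1 ((child_sublist' hc).subset h)
    · obtain ⟨h1, h2⟩ := mem_keys_of_edge c y z h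
      rw [cd_node_of_mem hn hc (Or.inr h1) (Or.inr h2), sep_eq_zero (iff_of_true h1 h2), zero_add]
      exact ih c hc (hn.sublist (child_sublist hc)) y z h

theorem cd_le_walk {t : KTree} (hn : t.keys.Nodup) {a b : ℕ} (p : t.graph.Walk a b) :
    t.cd a b ≤ p.length := by
  induction p with
  | nil => simp [cd_self]
  | @cons a b c h p ih =>
    have h1 : t.cd a b ≤ 1 := by
      rw [graph, SimpleGraph.fromRel_adj] at h
      rcases h.2 with h | h
      · exact cd_edge t hn _ _ h
      · rw [cd_comm]; exact cd_edge t hn _ _ h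
    have := cd_triangle t a b c
    rw [SimpleGraph.Walk.length_cons]
    omega

theorem child_graph_le {x : ℕ} {cs : List KTree} {c : KTree} (hc : c ∈ cs) :
    c.graph ≤ (node x cs).graph := by
  intro a b h
  rw [graph, SimpleGraph.fromRel_adj] at h ⊢
  have : ∀ e, e ∈ c.edges → e ∈ (node x cs).edges := by
    intro e he
    rw [edges_node]
    exact List.mem_append_right _ (List.mem_flatten.2 ⟨_, List.mem_map_of_mem hc, he⟩)
  exact ⟨h.1, h.2.imp (this _) (this _)⟩

theorem cd_child_le {x : ℕ} {cs : List KTree} {c : KTree} (hc : c ∈ cs) (a b : ℕ) :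
    sep c a b + c.cd a b ≤ (node x cs).cd a b := by
  rw [cd_node]
  exact List.single_le_sum (by simp) _
    (List.mem_map_of_mem (f := fun c => sep c a b + c.cd a b) hc)

theorem exists_walk_root (t : KTree) : t.keys.Nodup → ∀ a ∈ t.keys,
    ∃ p : t.graph.Walk t.rootKey a, p.length ≤ t.cd t.rootKey a := by
  induction t using ind with
  | h x cs ih =>
    intro hn a ha
    change ∃ p : (node x cs).graph.Walk x a, p.length ≤ (node x cs).cd x a
    rw [keys_node, List.mem_cons] at ha
    rcases ha with rfl | ha
    · exact ⟨SimpleGraph.Walk.nil, by simp⟩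
    · simp only [List.mem_flatten, List.mem_map] at ha
      obtain ⟨_, ⟨c, hc, rfl⟩, ha⟩ := ha
      have hcn := hn.sublist (child_sublist hc)
      obtain ⟨p, hp⟩ := ih c hc hcn a ha
      have hx : x ∉ c.keys := by
        rw [keys_node, List.nodup_cons] at hn
        exact fun h => hn.1 ((child_sublist' hc).subset h)
      have hadj : (node x cs).graph.Adj x c.rootKey := by
        rw [graph, SimpleGraph.fromRel_adj]
        refine ⟨fun h => hx (h ▸ rootKey_mem c), Or.inl ?_⟩
        rw [edges_node]
        exact List.mem_append_left _ (List.mem_map.2 ⟨c, hc, rfl⟩)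
      refine ⟨SimpleGraph.Walk.cons hadj (p.mapLe (child_graph_le hc)), ?_⟩
      have h1 := cd_child_le (x := x) hc x a
      have h2 : sep c x a = 1 := by simp [sep, hx, ha]
      rw [cd_congr_root hcn hx] at h1
      simp only [SimpleGraph.Walk.length_cons, SimpleGraph.Walk.length_map,
        SimpleGraph.Walk.mapLe]
      omega

theorem exists_walk (t : KTree) : t.keys.Nodup → ∀ a ∈ t.keys, ∀ b ∈ t.keys,
    ∃ p : t.graph.Walk a b, p.length ≤ t.cd a b := by
  induction t using ind with
  | h x cs ih =>
    intro hn a ha b hb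
    by_cases h : ∃ c ∈ cs, a ∈ c.keys ∧ b ∈ c.keys
    · obtain ⟨c, hc, hac, hbc⟩ := h
      obtain ⟨p, hp⟩ := ih c hc (hn.sublist (child_sublist hc)) a hac b hbc
      refine ⟨p.mapLe (child_graph_le hc), ?_⟩
      have h1 := cd_child_le (x := x) hc a b
      simp only [SimpleGraph.Walk.length_map, SimpleGraph.Walk.mapLe]
      omega
    -- No child contains both nodes: the path goes through the root, and no proper subtree is
    -- counted both in `cd x a` and in `cd x b`.
    · obtain ⟨p, hp⟩ : ∃ p : (node x cs).graph.Walk x a, p.length ≤ (node x cs).cd x a :=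
        exists_walk_root _ hn a ha
      obtain ⟨q, hq⟩ : ∃ q : (node x cs).graph.Walk x b, q.length ≤ (node x cs).cd x b :=
        exists_walk_root _ hn b hb
      refine ⟨p.reverse.append q, ?_⟩
      have : (node x cs).cd x a + (node x cs).cd x b ≤ (node x cs).cd a b := by
        unfold cd
        rw [← List.sum_map_add]
        refine List.sum_le_sum (fun w hw => ?_)
        have hx : x ∉ w.keys := root_not_mem hn hw
        obtain ⟨c, hc, hs⟩ := subs_child hw
        have hab : ¬ (a ∈ w.keys ∧ b ∈ w.keys) :=
          fun h' => h ⟨c, hc, hs.subset h'.1, hs.subset h'.2⟩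
        unfold sep
        split_ifs <;> first | omega | (exfalso; tauto)
      simp only [SimpleGraph.Walk.length_append, SimpleGraph.Walk.length_reverse]
      omega

theorem dist_eq_cd {t : KTree} (hn : t.keys.Nodup) {a b : ℕ} (ha : a ∈ t.keys)
    (hb : b ∈ t.keys) : t.dist a b = t.cd a b := by
  obtain ⟨p, hp⟩ := exists_walk t hn a ha b hb
  obtain ⟨q, hq⟩ := p.reachable.exists_walk_length_eq_dist
  unfold dist
  have h1 := cd_le_walk hn q
  have h2 := SimpleGraph.dist_le p
  omega

/-! ### The Wiener formula -/

/-- A subtree `w` separates exactly `2 * |w| * (|K| - |w|)` ordered pairs of nodes. -/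
theorem sum_sep {K : Finset ℕ} {w : KTree} (hn : w.keys.Nodup) (hs : w.keys.toFinset ⊆ K) :
    ∑ a ∈ K, ∑ b ∈ K, sep w a b = 2 * (w.size * (K.card - w.size)) := by
  classical
  have hcard : w.keys.toFinset.card = w.size := List.toFinset_card_of_nodup hn
  have h1 : ∀ a b, sep w a b =
      (if a ∈ w.keys.toFinset then 1 else 0) * (if b ∉ w.keys.toFinset then 1 else 0)
      + (if a ∉ w.keys.toFinset then 1 else 0) * (if b ∈ w.keys.toFinset then 1 else 0) := by
    intro a b
    simp only [sep, List.mem_toFinset]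
    by_cases ha : a ∈ w.keys <;> by_cases hb : b ∈ w.keys <;> simp [ha, hb]
  have h2 : ∑ a ∈ K, (if a ∈ w.keys.toFinset then 1 else 0) = w.size := by
    rw [← Finset.card_filter, Finset.filter_mem_eq_inter, Finset.inter_eq_right.2 hs, hcard]
  have h3 : ∑ a ∈ K, (if a ∉ w.keys.toFinset then 1 else 0) = K.card - w.size := by
    rw [← Finset.card_filter, Finset.filter_notMem_eq_sdiff, Finset.card_sdiff_of_subset hs, hcard]
  simp only [h1, Finset.sum_add_distrib, ← Finset.mul_sum, ← Finset.sum_mul, h2, h3]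
  ring

/-- Wiener's formula for the total distance of a tree. -/
theorem wiener {t : KTree} (hn : t.keys.Nodup) :
    t.totalDistUniform = 2 * (t.subs.map (fun w => w.size * (t.size - w.size))).sum := by
  have h1 : t.totalDistUniform = ∑ u ∈ t.keys.toFinset, ∑ v ∈ t.keys.toFinset, t.cd u v :=
    Finset.sum_congr rfl fun u hu => Finset.sum_congr rfl fun v hv =>
      dist_eq_cd hn (List.mem_toFinset.1 hu) (List.mem_toFinset.1 hv)
  rw [h1]
  have hcard : t.keys.toFinset.card = t.size := List.toFinset_card_of_nodup hn
  have key : ∀ l : List KTree, (∀ w ∈ l, w.keys.Sublist t.keys) →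
      ∑ u ∈ t.keys.toFinset, ∑ v ∈ t.keys.toFinset, (l.map (fun w => sep w u v)).sum
        = 2 * (l.map (fun w => w.size * (t.size - w.size))).sum := by
    intro l hl
    induction l with
    | nil => simp
    | cons w l ih =>
      have hw := hl w (by simp)
      simp only [List.map_cons, List.sum_cons, Finset.sum_add_distrib]
      rw [ih (fun w' h => hl w' (by simp [h])), sum_sep (hn.sublist hw)
        (fun a ha => List.mem_toFinset.2 (hw.subset (List.mem_toFinset.1 ha))), hcard]
      ring
  exact key _ (subs_sublist t)

/-- The sum of `f |w|` over all subtrees `w` of `t`, including `t` itself. Including `t` makes this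
additive over children, and costs nothing in the Wiener formula since `f |t| = 0` there. -/
def energy (f : ℕ → ℤ) (t : KTree) : ℤ := ((t :: t.subs).map (fun w => f w.size)).sum

theorem energy_node (f : ℕ → ℤ) (x : ℕ) (cs : List KTree) :
    energy f (node x cs) = f (node x cs).size + (cs.map (energy f)).sum := by
  unfold energy
  rw [List.map_cons, List.sum_cons, subs_node]
  congr 1
  induction cs with
  | nil => simp
  | cons c cs ih => simp at ih ⊢; rw [ih]; ring

theorem wiener_int {t : KTree} (hn : t.keys.Nodup) :
    (t.totalDistUniform : ℤ) = 2 * energy (fun s => s * (t.size - s)) t := by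
  rw [wiener hn, energy, List.map_cons, List.sum_cons]
  push_cast
  rw [List.map_map]
  simp only [sub_self, mul_zero, zero_add]
  congr 2
  refine List.map_congr_left fun w hw => ?_
  have : w.size ≤ t.size := (subs_sublist t w hw).length_le
  simp [Nat.cast_sub this]

/-! ### Effect of the tree operations on keys and subtree sizes -/

/-- Replacing a list entry `c` by `r` changes the sum of `g` by `g r - g c`, written without
subtraction so that it applies to multisets of keys as well. -/
theorem sum_set {M : Type*} [AddCommMonoid M] (g : KTree → M) : ∀ (cs : List KTree) (i : ℕ)
    (c r : KTree), cs[i]? = some c →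
    ((cs.set i r).map g).sum + g c = (cs.map g).sum + g r
  | [], i, c, r, h => by simp at h
  | a :: cs, 0, c, r, h => by
    simp at h; subst h
    simp only [List.set_cons_zero, List.map_cons, List.sum_cons]
    abel
  | a :: cs, i + 1, c, r, h => by
    have := sum_set g cs i c r (by simpa using h)
    simp only [List.set_cons_succ, List.map_cons, List.sum_cons]
    rw [add_assoc, this, add_assoc]

/-- The multiset of keys, which is additive over children. -/
def mkeys (t : KTree) : Multiset ℕ := t.keys

theorem mkeys_node (x : ℕ) (cs : List KTree) :
    (node x cs).mkeys = {x} + (cs.map mkeys).sum := by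
  unfold mkeys
  rw [keys_node, ← Multiset.cons_coe, ← Multiset.singleton_add]
  congr 1
  induction cs with
  | nil => rfl
  | cons c cs ih => simp [← ih]

theorem card_mkeys (t : KTree) : t.mkeys.card = t.size := rfl

/-- The sizes of the subtrees met on the way from the root of a tree down to a position (both ends
included). At an invalid position the default tree is used, as in `attachLeaf`. -/
def psizes : KTree → List ℕ → List ℕ
  | t, [] => [t.size]
  | node x cs, i :: is => (node x cs).size :: psizes (cs.getD i default) is

theorem psizes_length : ∀ (pos : List ℕ) (t : KTree), (psizes t pos).length = pos.length + 1
  | [], t => by cases t; simp [psizes]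
  | i :: is, node x cs => by simp [psizes, psizes_length is]

theorem subtreeAt_cons {x : ℕ} {cs : List KTree} {i : ℕ} {is : List ℕ}
    (h : (subtreeAt (node x cs) (i :: is)).isSome) :
    ∃ c, cs[i]? = some c ∧ cs.getD i default = c ∧ (subtreeAt c is).isSome := by
  rw [subtreeAt] at h
  cases hc : cs[i]? with
  | none => simp [hc] at h
  | some c => exact ⟨c, rfl, by simp [List.getD, hc], by simpa [hc] using h⟩

theorem mkeys_attachLeaf (u : ℕ) : ∀ (pos : List ℕ) (t : KTree), (subtreeAt t pos).isSome →
    (attachLeaf t pos u).mkeys = t.mkeys + {u}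
  | [], node x cs, _ => by
    simp [attachLeaf, mkeys_node]
  | i :: is, node x cs, h => by
    obtain ⟨c, hc, hd, hs⟩ := subtreeAt_cons h
    have h1 := mkeys_attachLeaf u is c hs
    have h2 := sum_set mkeys cs i c (attachLeaf c is u) hc
    rw [h1, ← add_assoc, add_right_comm, add_left_inj] at h2
    rw [attachLeaf, hd, mkeys_node, mkeys_node, h2, add_assoc]

theorem size_attachLeaf (u : ℕ) (pos : List ℕ) (t : KTree) (h : (subtreeAt t pos).isSome) :
    (attachLeaf t pos u).size = t.size + 1 := by
  rw [← card_mkeys, mkeys_attachLeaf u pos t h]; simp [card_mkeys]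

theorem energy_attachLeaf (f : ℕ → ℤ) (u : ℕ) : ∀ (pos : List ℕ) (t : KTree),
    (subtreeAt t pos).isSome → energy f (attachLeaf t pos u) =
      energy f t + f 1 + ((psizes t pos).map (fun s => f (s + 1) - f s)).sum
  | [], node x cs, h => by
    have hs := size_attachLeaf u [] (node x cs) h
    rw [attachLeaf] at hs ⊢
    rw [energy_node, hs, energy_node]
    have : energy f (node u []) = f 1 := by
      simp [energy, subs_node, size_node]
    simp [psizes, this]
    ring
  | i :: is, node x cs, h => by
    have hs := size_attachLeaf u (i :: is) (node x cs) h
    obtain ⟨c, hc, hd, hs'⟩ := subtreeAt_cons h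
    have h1 := energy_attachLeaf f u is c hs'
    have h2 := sum_set (energy f) cs i c (attachLeaf c is u) hc
    rw [attachLeaf, hd] at hs ⊢
    rw [energy_node, hs, energy_node]
    simp only [psizes, hd, List.map_cons, List.sum_cons]
    linarith

theorem mkeys_replaceAt {o r : KTree} (hk : r.mkeys = o.mkeys) : ∀ (P : List ℕ) (t : KTree),
    subtreeAt t P = some o → (replaceAt t P r).mkeys = t.mkeys
  | [], t, h => by
    cases t; simp only [subtreeAt, Option.some.injEq] at h
    rw [replaceAt, hk, h]
  | i :: is, node x cs, h => by
    obtain ⟨c, hc, hd, hs⟩ := subtreeAt_cons (by rw [h]; rfl)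
    have h0 : subtreeAt c is = some o := by simpa [subtreeAt, hc] using h
    have h1 := mkeys_replaceAt hk is c h0
    have h2 := sum_set mkeys cs i c (replaceAt c is r) hc
    rw [h1, add_left_inj] at h2
    rw [replaceAt, hd, mkeys_node, mkeys_node, h2]

/-- When the replacement `r` has the keys of the original `o`, no subtree above position `P` changes
its size. -/
theorem energy_replaceAt (f : ℕ → ℤ) {o r : KTree} (hk : r.mkeys = o.mkeys) :
    ∀ (P : List ℕ) (t : KTree), subtreeAt t P = some o →
      energy f (replaceAt t P r) = energy f t + energy f r - energy f o
  | [], t, h => by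
    cases t; simp only [subtreeAt, Option.some.injEq] at h
    rw [replaceAt, h]; ring
  | i :: is, node x cs, h => by
    have hk' := mkeys_replaceAt hk (i :: is) _ h
    have hs : (replaceAt (node x cs) (i :: is) r).size = (node x cs).size := by
      rw [← card_mkeys, hk', card_mkeys]
    obtain ⟨c, hc, hd, -⟩ := subtreeAt_cons (by rw [h]; rfl)
    have h0 : subtreeAt c is = some o := by simpa [subtreeAt, hc] using h
    have h1 := energy_replaceAt f hk is c h0
    have h2 := sum_set (energy f) cs i c (replaceAt c is r) hc
    rw [replaceAt, hd] at hs ⊢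
    rw [energy_node, hs, energy_node]
    linarith

theorem mkeys_subtreeAt : ∀ (P : List ℕ) (t o : KTree), subtreeAt t P = some o →
    o.mkeys ≤ t.mkeys
  | [], t, o, h => by
    cases t; simp only [subtreeAt, Option.some.injEq] at h
    rw [h]
  | i :: is, node x cs, o, h => by
    obtain ⟨c, hc, hd, -⟩ := subtreeAt_cons (by rw [h]; rfl)
    have h0 : subtreeAt c is = some o := by simpa [subtreeAt, hc] using h
    exact (mkeys_subtreeAt is c o h0).trans
      (Multiset.coe_le.2 (child_sublist (List.mem_of_getElem? hc)).subperm)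

theorem psizes_attachLeaf (u : ℕ) : ∀ (pos : List ℕ) (t : KTree), (subtreeAt t pos).isSome →
    psizes (attachLeaf t pos u) pos = (psizes t pos).map (· + 1)
  | [], t, h => by
    have := size_attachLeaf u [] t h
    simp [psizes, this]
  | i :: is, node x cs, h => by
    have hs := size_attachLeaf u (i :: is) (node x cs) h
    obtain ⟨c, hc, hd, hs'⟩ := subtreeAt_cons h
    obtain ⟨hi, -⟩ := List.getElem?_eq_some_iff.1 hc
    rw [attachLeaf, hd] at hs ⊢
    simp only [psizes, hs, hd, List.map_cons, ← psizes_attachLeaf u is c hs']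
    simp [List.getD, hi]

theorem isSome_attachLeaf (u : ℕ) : ∀ (pos : List ℕ) (t : KTree), (subtreeAt t pos).isSome →
    (subtreeAt (attachLeaf t pos u) pos).isSome
  | [], t, h => by simp [subtreeAt]
  | i :: is, node x cs, h => by
    obtain ⟨c, hc, hd, hs'⟩ := subtreeAt_cons h
    obtain ⟨hi, -⟩ := List.getElem?_eq_some_iff.1 hc
    rw [attachLeaf, hd, subtreeAt]
    simpa [hi] using isSome_attachLeaf u is c hs'

/-! ### Bounds on subtree sizes along a path -/

/-- `1 + k + ⋯ + k ^ h`, the size of the full `k`-ary tree of height `h`. -/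
def geo (k h : ℕ) : ℕ := ∑ i ∈ Finset.range (h + 1), k ^ i

theorem geo_succ (k h : ℕ) : geo k (h + 1) = k * geo k h + 1 := by
  unfold geo
  rw [Finset.sum_range_succ', Finset.mul_sum]
  simp [pow_succ, mul_comm]

theorem child_height {x : ℕ} {cs : List KTree} {c : KTree} (hc : c ∈ cs) :
    c.height + 1 ≤ (node x cs).height := by
  rw [height_node]
  induction cs with
  | nil => simp at hc
  | cons a cs ih =>
    rw [List.map_cons, List.foldr_cons]
    rcases List.mem_cons.1 hc with rfl | hc
    · exact le_max_left _ _
    · exact (ih hc).trans (le_max_right _ _)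

theorem degLE_node {k x : ℕ} {cs : List KTree} (h : DegLE k (node x cs)) :
    cs.length ≤ k ∧ ∀ c ∈ cs, DegLE k c := by
  rwa [DegLE] at h

theorem size_le_geo {k : ℕ} (t : KTree) : DegLE k t → ∀ H, t.height ≤ H → t.size ≤ geo k H := by
  induction t using ind with
  | h x cs ih =>
    intro hd H hH
    obtain ⟨hl, hd⟩ := degLE_node hd
    rw [size_node]
    cases H with
    | zero =>
      cases cs with
      | nil => simp [geo]
      | cons c cs => have := child_height (x := x) (List.mem_cons_self (a := c) (l := cs)); omega
    | succ H =>
      have : (cs.map size).sum ≤ (cs.map size).length • geo k H := by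
        refine List.sum_le_card_nsmul _ _ ?_
        intro s hs
        obtain ⟨c, hc, rfl⟩ := List.mem_map.1 hs
        exact ih c hc (hd c hc) H (by have := child_height (x := x) hc; omega)
      rw [geo_succ]
      rw [List.length_map, smul_eq_mul] at this
      have := Nat.mul_le_mul_right (geo k H) hl
      omega

theorem sum_countAt_le (t : KTree) : ∀ m, ∑ d ∈ Finset.range m, t.countAt d ≤ t.size := by
  induction t using ind with
  | h x cs ih =>
    intro m
    cases m with
    | zero => simp
    | succ m =>
      rw [Finset.sum_range_succ', size_node]
      simp only [countAt_succ]
      have h0 : (node x cs).countAt 0 = 1 := by simp [countAt]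
      have : ∑ d ∈ Finset.range m, (cs.map (fun c => c.countAt d)).sum ≤ (cs.map size).sum := by
        clear h0
        induction cs with
        | nil => simp
        | cons c cs ih' =>
          simp only [List.map_cons, List.sum_cons, Finset.sum_add_distrib]
          exact add_le_add (ih c (by simp) m) (ih' fun c hc => ih c (by simp [hc]))
      omega

/-- For `k ≥ 2` the recursion `geo k (H + 1) = k * geo k H + 1` at least doubles, so the sizes along
a path sum to at most twice the bound on the first one. -/
theorem sum_psizes_le {k : ℕ} (hk : 2 ≤ k) : ∀ (pos : List ℕ) (t : KTree) (H : ℕ),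
    DegLE k t → t.height ≤ H → (subtreeAt t pos).isSome → (psizes t pos).sum ≤ 2 * geo k H
  | [], t, H, hd, hH, _ => by
    have := size_le_geo t hd H hH
    simp only [psizes, List.sum_cons, List.sum_nil]
    omega
  | i :: is, node x cs, H, hd, hH, h => by
    have h1 := size_le_geo _ hd H hH
    obtain ⟨c, hc, hgd, hs⟩ := subtreeAt_cons h
    have hm := List.mem_of_getElem? hc
    have hh := child_height (x := x) hm
    obtain ⟨H, rfl⟩ : ∃ H', H = H' + 1 := ⟨H - 1, by omega⟩
    have h2 := sum_psizes_le hk is c H ((degLE_node hd).2 c hm) (by omega) hs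
    simp only [psizes, hgd, List.sum_cons]
    have h3 := geo_succ k H
    have := Nat.mul_le_mul_right (geo k H) hk
    omega

/-- In a weakly-complete tree with `k ≥ 2`, the subtrees along a path from the root have total size
at most three times the tree: the levels above the last already fill `geo k (height - 1)` nodes,
and everything on the path below the root sums to at most twice that. -/
theorem sum_psizes_le_three {k : ℕ} (hk : 2 ≤ k) {t : KTree} (hwc : WeaklyComplete k t) :
    ∀ pos, (subtreeAt t pos).isSome → (psizes t pos).sum ≤ 3 * t.size
  | [], _ => by
    simp only [psizes, List.sum_cons, List.sum_nil]
    omega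
  | i :: is, h => by
    cases t with
    | node x cs =>
      obtain ⟨c, hc, hgd, hs⟩ := subtreeAt_cons h
      have hm := List.mem_of_getElem? hc
      have hh := child_height (x := x) hm
      have h0 := sum_countAt_le (node x cs) (node x cs).height
      rw [Finset.sum_congr rfl (fun d hd => hwc.2 d (Finset.mem_range.1 hd))] at h0
      obtain ⟨H, hH⟩ : ∃ H, (node x cs).height = H + 1 := ⟨(node x cs).height - 1, by omega⟩
      rw [hH] at h0
      change geo k H ≤ _ at h0
      have h2 := sum_psizes_le hk is c H ((degLE_node hwc.1).2 c hm) (by omega) hs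
      simp only [psizes, hgd, List.sum_cons]
      omega

/-- For `k = 1` a tree of height `H` is a path on `H + 1` nodes, and the sizes along it sum to at most
a triangular number. -/
theorem sum_psizes_path : ∀ (pos : List ℕ) (t : KTree) (H : ℕ),
    DegLE 1 t → t.height ≤ H → (subtreeAt t pos).isSome →
      2 * (psizes t pos).sum ≤ (H + 1) * (H + 2)
  | [], t, H, hd, hH, _ => by
    have := size_le_geo t hd H hH
    simp only [psizes, List.sum_cons, List.sum_nil]
    simp [geo] at this
    nlinarith
  | i :: is, node x cs, H, hd, hH, h => by
    have h1 := size_le_geo _ hd H hH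
    simp [geo] at h1
    obtain ⟨c, hc, hgd, hs⟩ := subtreeAt_cons h
    have hm := List.mem_of_getElem? hc
    have hh := child_height (x := x) hm
    obtain ⟨H, rfl⟩ : ∃ H', H = H' + 1 := ⟨H - 1, by omega⟩
    have h2 := sum_psizes_path is c H ((degLE_node hd).2 c hm) (by omega) hs
    simp only [psizes, hgd, List.sum_cons]
    nlinarith

theorem length_lt_size : ∀ (pos : List ℕ) (t : KTree), (subtreeAt t pos).isSome →
    pos.length + 1 ≤ t.size
  | [], node x cs, _ => by rw [size_node]; simp
  | i :: is, node x cs, h => by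
    obtain ⟨c, hc, hgd, hs⟩ := subtreeAt_cons h
    have h1 := length_lt_size is c hs
    have h2 : c.size ≤ (cs.map size).sum :=
      List.single_le_sum (by simp) _ (List.mem_map_of_mem (List.mem_of_getElem? hc))
    rw [size_node, List.length_cons]
    omega

/-- The sizes along a path strictly decrease down to at least `1`, so they sum to at least a
triangular number. -/
theorem le_sum_psizes : ∀ (pos : List ℕ) (t : KTree), (subtreeAt t pos).isSome →
    (pos.length + 1) * (pos.length + 2) ≤ 2 * (psizes t pos).sum
  | [], t, h => by
    have := length_lt_size [] t h
    simp [psizes] at this ⊢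
    omega
  | i :: is, node x cs, h => by
    have h0 := length_lt_size _ _ h
    obtain ⟨c, hc, hgd, hs⟩ := subtreeAt_cons h
    have h1 := le_sum_psizes is c hs
    simp only [psizes, hgd, List.sum_cons, List.length_cons] at h0 ⊢
    nlinarith

theorem two_children_size {x : ℕ} {cs : List KTree} {i j : ℕ} {s t : KTree} (hij : i ≠ j)
    (hi : cs[i]? = some s) (hj : cs[j]? = some t) :
    1 + s.size + t.size ≤ (node x cs).size := by
  have h1 := sum_set size cs i s (node 0 []) hi
  have h2 : (cs.set i (node 0 []))[j]? = some t := by rw [List.getElem?_set_ne hij, hj]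
  have h4 := sum_set size _ j t (node 0 []) h2
  -- Both children are replaced by single nodes; the resulting list has length at least two, and
  -- every entry has size at least one.
  have h3 : (node 0 []).size = 1 := by simp [size_node]
  have h5 : (((cs.set i (node 0 [])).set j (node 0 [])).map size).length
      ≤ (((cs.set i (node 0 [])).set j (node 0 [])).map size).sum := by
    refine List.length_le_sum_of_one_le _ ?_
    intro m hm
    obtain ⟨c, -, rfl⟩ := List.mem_map.1 hm
    exact length_lt_size [] c (by cases c; simp [subtreeAt])
  obtain ⟨hi', -⟩ := List.getElem?_eq_some_iff.1 hi
  obtain ⟨hj', -⟩ := List.getElem?_eq_some_iff.1 hj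
  simp only [List.length_map, List.length_set] at h5
  rw [size_node]
  omega

/-- The change of `∑ s * (N - s)` when every `s` in the list grows by one. -/
theorem sum_increment (N : ℤ) (l : List ℕ) :
    (l.map (fun s : ℕ => (((s + 1 : ℕ) : ℤ) * (N - ((s + 1 : ℕ) : ℤ)) - (s : ℤ) * (N - s)))).sum
      = l.length * (N - 1) - 2 * (l.sum : ℕ) := by
  induction l with
  | nil => simp
  | cons s l ih =>
    rw [List.map_cons, List.sum_cons, ih, List.length_cons, List.sum_cons]
    push_cast
    ring

end KTree

open KTree

/-- if a push-up operation is performed in a tree `G` from a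
weakly-complete `k`-ary subtree `T` of height `h₂` to a weakly-complete sibling subtree
`S` of height `h₁ = height S'` (with `h₁ < h₂`, `h₁` measured after the move and `h₂`
before), then the total distance of `G` under the finite uniform workload increases by
at most `8k·|V(T)|`; since `|V(T)| ≤ n`, this is `O(k·n)` for a tree on `n` nodes. -/
theorem pushUp_increases_totalDist_by_at_most
    (k n : ℕ) (G : KTree) (hn : G.size = n) (hnd : G.keys.Nodup)
    (P : List ℕ) (x : ℕ) (cs : List KTree)
    (hP : subtreeAt G P = some (node x cs))
    (iT iS : ℕ) (hne : iT ≠ iS)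
    (T S : KTree) (hT : cs[iT]? = some T) (hS : cs[iS]? = some S)
    (u : ℕ) (T₀ : KTree) (posT : List ℕ)
    (hTdecomp : T = attachLeaf T₀ posT u)
    (hposT : (subtreeAt T₀ posT).isSome)
    (hlastT : posT.length + 1 = T.height)
    (posS : List ℕ) (hposS : (subtreeAt S posS).isSome)
    (S' : KTree) (hS' : S' = attachLeaf S posS u)
    (hlastS : posS.length + 1 = S'.height)
    (hwcT : WeaklyComplete k T) (hwcS' : WeaklyComplete k S')
    (hheights : S'.height < T.height)
    (G' : KTree) (hG' : G' = replaceAt G P (node x ((cs.set iT T₀).set iS S'))) :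
    totalDistUniform G' ≤ totalDistUniform G + 8 * k * T.size ∧
    totalDistUniform G' ≤ totalDistUniform G + 8 * k * n := by
  have hSsize := size_attachLeaf u posS S hposS
  have hTsize := size_attachLeaf u posT T₀ hposT
  have hTkeys := mkeys_attachLeaf u posT T₀ hposT
  have hSkeys := mkeys_attachLeaf u posS S hposS
  have hTsub := isSome_attachLeaf u posT T₀ hposT
  have hTpath := psizes_attachLeaf u posT T₀ hposT
  rw [← hTdecomp] at hTsize hTkeys hTsub hTpath
  rw [← hS'] at hSsize hSkeys
  have hS2 : (cs.set iT T₀)[iS]? = some S := by rw [List.getElem?_set_ne hne, hS]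
  have hk : (node x ((cs.set iT T₀).set iS S')).mkeys = (node x cs).mkeys := by
    have h1 := sum_set mkeys cs iT T T₀ hT
    have h2 := sum_set mkeys _ iS S S' hS2
    rw [hTkeys, ← add_assoc, add_right_comm, add_left_inj] at h1
    rw [hSkeys, ← add_assoc, add_right_comm, add_left_inj] at h2
    rw [mkeys_node, mkeys_node, h2, h1]
  have hGk : G'.mkeys = G.mkeys := by rw [hG']; exact mkeys_replaceAt hk P G hP
  have hnd' : G'.keys.Nodup := by
    rw [← Multiset.coe_nodup] at hnd ⊢
    change G'.mkeys.Nodup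
    rw [hGk]; exact hnd
  have hsz : G'.size = G.size := by rw [← card_mkeys, hGk, card_mkeys]
  have hON : (node x cs).size ≤ G.size := by
    rw [← card_mkeys, ← card_mkeys]; exact Multiset.card_le_card (mkeys_subtreeAt P G _ hP)
  have hTS := two_children_size (x := x) hne hT hS
  have hTn : T.size ≤ n := by omega
  -- By the Wiener formula only the subtrees on the two paths from `x` contribute: each loses
  -- or gains one node, changing `s * (|G| - s)` by the amount computed in `sum_increment`.
  have hdiff : (totalDistUniform G' : ℤ) = totalDistUniform G
      + 2 * (((posS.length : ℤ) - posT.length) * (G.size - 1)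
        - 2 * (psizes S posS).sum + 2 * (psizes T₀ posT).sum) := by
    rw [wiener_int hnd, wiener_int hnd', hsz, hG', energy_replaceAt _ hk P G hP,
      energy_node, energy_node]
    set f : ℕ → ℤ := fun s => (s : ℤ) * (G.size - s) with hf
    have hrs : (node x ((cs.set iT T₀).set iS S')).size = (node x cs).size := by
      rw [← card_mkeys, hk, card_mkeys]
    have h1 := sum_set (energy f) cs iT T T₀ hT
    have h2 := sum_set (energy f) _ iS S S' hS2
    have h3 := energy_attachLeaf f u posT T₀ hposT
    have h4 := energy_attachLeaf f u posS S hposS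
    rw [← hTdecomp, sum_increment, psizes_length] at h3
    rw [← hS', sum_increment, psizes_length] at h4
    rw [hrs]
    push_cast at h3 h4 ⊢
    linarith
  have main : ((posS.length : ℤ) - posT.length) * (G.size - 1)
        - 2 * (psizes S posS).sum + 2 * (psizes T₀ posT).sum ≤ 4 * (k * T.size) := by
    -- The two paths have `posS.length + 1 < posT.length + 1` nodes, so the first term is negative;
    -- for `2 ≤ k` dropping it still leaves enough room.
    have hlen : posS.length < posT.length := by omega
    have hpsum : (psizes T posT).sum = (psizes T₀ posT).sum + (posT.length + 1) := by
      rw [hTpath, List.sum_map_add, List.map_id']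
      simp [psizes_length]
    rcases Nat.lt_or_ge k 2 with hk2 | hk2
    -- For `k ≤ 1` the trees are paths and the term `2 * (psizes T₀ posT).sum` is quadratic in the
    -- height; it has to be cancelled against the two negative terms.
    · have hk1 : k = 1 := by
        rcases Nat.eq_zero_or_pos k with rfl | hpos
        · have := size_le_geo T hwcT.1 _ le_rfl
          rw [← hlastT, geo_succ] at this
          have := length_lt_size posT T hTsub
          omega
        · omega
      subst hk1
      have h1 := sum_psizes_path posT T _ hwcT.1 le_rfl hTsub
      have h2 := le_sum_psizes posS S hposS
      have h3 := length_lt_size posS S hposS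
      have h4 := length_lt_size posT T₀ hposT
      rw [← hlastT, hpsum] at h1
      have h5 : (posS.length : ℤ) + posT.length + 3 ≤ G.size - 1 := by omega
      have h6 : (posT.length : ℤ) + 2 ≤ T.size := by omega
      have h7 : (posS.length : ℤ) < posT.length := by exact_mod_cast hlen
      have h8 := mul_le_mul_of_nonneg_left h5 (sub_nonneg.2 h7.le)
      zify at h1 h2
      push_cast
      linarith
    · have h0 := sum_countAt_le T T.height
      have h1 := sum_psizes_le_three hk2 hwcT posT hTsub
      have h2 : 2 * T.size ≤ k * T.size := Nat.mul_le_mul_right _ hk2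
      have h3 : (0 : ℤ) ≤ (posT.length - posS.length) * (G.size - 1) :=
        mul_nonneg (by omega) (by omega)
      have h4 : ((psizes T₀ posT).sum : ℤ) ≤ 4 * T.size := by omega
      have h5 : (2 * T.size : ℤ) ≤ k * T.size := by exact_mod_cast h2
      have h6 : (0 : ℤ) ≤ (psizes S posS).sum := by positivity
      linarith
  have hfin : totalDistUniform G' ≤ totalDistUniform G + 8 * k * T.size := by
    zify
    linarith
  exact ⟨hfin, hfin.trans (Nat.add_le_add_left (Nat.mul_le_mul_left _ hTn) _)⟩
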